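/- Let I ⊂ R and J ⊂ T be nonzero proper monomial ideals, identified with their extensions to S = R ⊗_K T, and let k ≥ 1. Then v((I+J)^k) = min over pairs (p,q), with p ⊂ R and q ⊂ T nonzero monomial prime ideals satisfying p + q ∈ Ass((I+J)^k), of min{ v_p(I^{k−ℓ}) + v_q(J^{ℓ+1}) : 0 ≤ ℓ < k, p ∈ Ass(I^{k−ℓ}), q ∈ Ass(J^{ℓ+1}) }, where v_p(I^{k−ℓ}) is computed in R, v_q(J^{ℓ+1}) is computed in T, and v((I+J)^k) is computed in S. -/

import Mathlib

open MvPolynomial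

noncomputable section

/-- The set of associated primes `Ass(L)` of the quotient by an ideal `L`. -/
def assOf {A : Type} [CommRing A] (L : Ideal A) : Set (Ideal A) :=
  associatedPrimes A (A ⧸ L)

/-- `𝔄` is the stable value `Ass^∞(L)` of `Ass(L^k)` for all large `k`. -/
def IsStableAssValue {A : Type} [CommRing A] (L : Ideal A) (𝔄 : Set (Ideal A)) : Prop :=
  ∃ N : ℕ, ∀ k : ℕ, N ≤ k → assOf (L ^ k) = 𝔄

/-- `Ass^*(L) = ⋃_{k ≥ 1} Ass(L^k)`. -/
def assStar {A : Type} [CommRing A] (L : Ideal A) : Set (Ideal A) :=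
  {p | ∃ k : ℕ, 1 ≤ k ∧ p ∈ assOf (L ^ k)}

/-- The local v-number `v_p(L)`: the least degree of a homogeneous `f` with `(L : f) = p`. -/
def vnum {σ K : Type} [Field K] (L p : Ideal (MvPolynomial σ K)) : ℕ :=
  sInf {d : ℕ | ∃ f : MvPolynomial σ K, f.IsHomogeneous d ∧ L.colon (Ideal.span {f}) = p}

/-- The v-number `v(L) = min_{p ∈ Ass(L)} v_p(L)`. -/
def vnumber {σ K : Type} [Field K] (L : Ideal (MvPolynomial σ K)) : ℕ :=
  sInf {d : ℕ | ∃ p ∈ assOf L, ∃ f : MvPolynomial σ K,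
    f.IsHomogeneous d ∧ L.colon (Ideal.span {f}) = p}

/-- The initial degree `α(L)`: the least `d` such that `L` contains a nonzero
homogeneous element of degree `d`. -/
def alphaDeg {σ K : Type} [Field K] (L : Ideal (MvPolynomial σ K)) : ℕ :=
  sInf {d : ℕ | ∃ f ∈ L, f ≠ 0 ∧ MvPolynomial.IsHomogeneous f d}

/-- A graded (homogeneous) ideal: one containing all homogeneous components
of each of its elements. -/
def IsGradedIdeal {σ K : Type} [Field K] (I : Ideal (MvPolynomial σ K)) : Prop :=
  ∀ f ∈ I, ∀ d : ℕ, homogeneousComponent d f ∈ I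

/-- A monomial ideal: an ideal generated by monomials. -/
def IsMonomialIdeal {σ K : Type} [Field K] (I : Ideal (MvPolynomial σ K)) : Prop :=
  ∃ G : Set (σ →₀ ℕ), I = Ideal.span ((fun a => (monomial a (1 : K))) '' G)

/-!
For a monomial ideal `L ≠ ⊤` let `ord_L u` be the largest `a` with `x ^ u ∈ L ^ a`. Multiplying by
one variable raises the order by at most one, and
`ord_{I + J} (x ^ u * y ^ v) = ord_I u + ord_J v`.
If the colon of `(I + J) ^ k` by `x ^ u * y ^ v` is `p + q` with `p` and `q` nonzero monomial
primes, then the order of this monomial is less than `k`, but becomes at least `k` after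
multiplication by a variable of `p`; hence it equals `k - 1`. With `a = ord_I u` and `b = ord_J v`
this says `k = a + b + 1`, and then `p` is the colon of `I ^ (a + 1)` by `x ^ u` and `q` the colon
of `J ^ (b + 1)` by `y ^ v`. The converse holds as well. As a prime colon of a monomial ideal by
`f` is already its colon by some monomial of `f`, all v-numbers involved are attained at
monomials, whose degrees add up.
-/

section Exponents

variable {σ R : Type*} [CommSemiring R] {L M : Ideal (MvPolynomial σ R)} {u v : σ →₀ ℕ}

/-- The set of exponents of the monomials lying in `L`. It determines a monomial ideal and turns
products of monomial ideals into pointwise sums. -/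
def exponents (L : Ideal (MvPolynomial σ R)) : Set (σ →₀ ℕ) :=
  {u | monomial u 1 ∈ L}

theorem mem_exponents : u ∈ exponents L ↔ monomial u 1 ∈ L :=
  Iff.rfl

theorem zero_mem_exponents_iff : 0 ∈ exponents L ↔ L = ⊤ :=
  (Ideal.eq_top_iff_one L).symm

theorem exponents_mono (h : L ≤ M) : exponents L ⊆ exponents M :=
  fun _ hu => h hu

theorem add_mem_exponents_mul (hu : u ∈ exponents L) (hv : v ∈ exponents M) :
    u + v ∈ exponents (L * M) := by
  rw [mem_exponents, ← one_mul (1 : R), ← monomial_mul]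
  exact Ideal.mul_mem_mul hu hv

theorem isUpperSet_exponents (L : Ideal (MvPolynomial σ R)) : IsUpperSet (exponents L) := by
  intro u v huv hu
  obtain ⟨w, rfl⟩ := exists_add_of_le huv
  rw [mem_exponents, ← one_mul (1 : R), ← monomial_mul]
  exact L.mul_mem_right _ hu

theorem nsmul_mem_exponents_pow (hu : u ∈ exponents L) (a : ℕ) : a • u ∈ exponents (L ^ a) := by
  simpa only [mem_exponents, monomial_pow, one_pow] using Ideal.pow_mem_pow hu a

theorem mem_exponents_span [Nontrivial R] {G : Set (σ →₀ ℕ)} :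
    u ∈ exponents (Ideal.span ((fun a => monomial a (1 : R)) '' G)) ↔ ∃ g ∈ G, g ≤ u := by
  classical
  rw [mem_exponents, mem_ideal_span_monomial_image]
  simp only [support_monomial, one_ne_zero, if_false, Finset.mem_singleton, forall_eq]

open scoped Pointwise in
theorem span_monomial_mul_span_monomial (G H : Set (σ →₀ ℕ)) :
    Ideal.span ((fun a => monomial a (1 : R)) '' G) *
        Ideal.span ((fun a => monomial a (1 : R)) '' H) =
      Ideal.span ((fun a => monomial a (1 : R)) '' (G + H)) := by
  rw [Ideal.span_mul_span', ← Set.image2_mul, Set.image2_image_left, Set.image2_image_right,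
    ← Set.image2_add, Set.image_image2]
  simp only [monomial_mul, one_mul]

end Exponents

section MonomialIdeals

variable {σ K : Type} [Field K] {L M : Ideal (MvPolynomial σ K)}

theorem IsMonomialIdeal.mem_iff (hL : IsMonomialIdeal L) {f : MvPolynomial σ K} :
    f ∈ L ↔ ∀ u ∈ f.support, u ∈ exponents L := by
  obtain ⟨G, rfl⟩ := hL
  simp only [mem_exponents_span, mem_ideal_span_monomial_image]

theorem isMonomialIdeal_of_forall_mem_support
    (h : ∀ f ∈ L, ∀ u ∈ f.support, u ∈ exponents L) : IsMonomialIdeal L := by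
  refine ⟨exponents L, le_antisymm (fun f hf => ?_) (Ideal.span_le.mpr ?_)⟩
  · exact mem_ideal_span_monomial_image.mpr fun u hu => ⟨u, h f hf u hu, le_rfl⟩
  · rintro _ ⟨u, hu, rfl⟩
    exact hu

theorem IsMonomialIdeal.ext (hL : IsMonomialIdeal L) (hM : IsMonomialIdeal M)
    (h : exponents L = exponents M) : L = M := by
  ext f
  rw [hL.mem_iff, hM.mem_iff, h]

theorem IsMonomialIdeal.nonempty_exponents (hL : IsMonomialIdeal L) (h0 : L ≠ ⊥) :
    (exponents L).Nonempty := by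
  obtain ⟨f, hf, hf0⟩ := Submodule.exists_mem_ne_zero_of_ne_bot h0
  exact (support_nonempty.mpr hf0).imp (hL.mem_iff.mp hf)

theorem IsMonomialIdeal.mul (hL : IsMonomialIdeal L) (hM : IsMonomialIdeal M) :
    IsMonomialIdeal (L * M) := by
  obtain ⟨G, rfl⟩ := hL
  obtain ⟨H, rfl⟩ := hM
  exact ⟨_, span_monomial_mul_span_monomial G H⟩

theorem isMonomialIdeal_top : IsMonomialIdeal (⊤ : Ideal (MvPolynomial σ K)) :=
  isMonomialIdeal_of_forall_mem_support fun _ _ _ _ => by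
    simp only [mem_exponents, Submodule.mem_top]

theorem IsMonomialIdeal.pow (hL : IsMonomialIdeal L) (a : ℕ) : IsMonomialIdeal (L ^ a) := by
  induction a with
  | zero => simpa only [pow_zero, Ideal.one_eq_top] using isMonomialIdeal_top
  | succ a ih => simpa only [pow_succ] using ih.mul hL

open scoped Pointwise in
theorem IsMonomialIdeal.exponents_mul (hL : IsMonomialIdeal L) (hM : IsMonomialIdeal M) :
    exponents (L * M) = exponents L + exponents M := by
  refine Set.Subset.antisymm (fun u hu => ?_) ?_
  · obtain ⟨G, rfl⟩ := hL
    obtain ⟨H, rfl⟩ := hM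
    rw [span_monomial_mul_span_monomial, mem_exponents_span] at hu
    obtain ⟨_, ⟨g, hg, h, hh, rfl⟩, hle⟩ := hu
    obtain ⟨w, rfl⟩ := exists_add_of_le hle
    rw [add_assoc]
    exact Set.add_mem_add (mem_exponents_span.mpr ⟨g, hg, le_rfl⟩)
      (mem_exponents_span.mpr ⟨h, hh, le_self_add⟩)
  · exact Set.add_subset_iff.mpr fun u hu v hv => add_mem_exponents_mul hu hv

theorem IsMonomialIdeal.le_idealOfVars (hL : IsMonomialIdeal L) (hL1 : L ≠ ⊤) :
    L ≤ idealOfVars σ K := by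
  intro f hf
  rw [← pow_one (idealOfVars σ K), mem_pow_idealOfVars_iff]
  intro u hu
  by_contra! hdeg
  obtain rfl : u = 0 := (Finsupp.degree_eq_zero_iff u).mp (Nat.lt_one_iff.mp hdeg)
  exact hL1 (zero_mem_exponents_iff.mp (hL.mem_iff.mp hf 0 hu))

end MonomialIdeals

section Order

/-- The order of the monomial with exponent `u` along `L`: the largest `a` for which it lies in
`L ^ a`. If there is no largest such `a`, as for `L = ⊤`, the value is `0`. -/
def idealOrder {σ R : Type*} [CommSemiring R] (L : Ideal (MvPolynomial σ R)) (u : σ →₀ ℕ) : ℕ :=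
  sSup {a | u ∈ exponents (L ^ a)}

variable {σ K : Type} [Field K] {L : Ideal (MvPolynomial σ K)} {u v : σ →₀ ℕ} {a : ℕ}

theorem IsMonomialIdeal.le_idealOrder_iff (hL : IsMonomialIdeal L) (hL1 : L ≠ ⊤) :
    a ≤ idealOrder L u ↔ u ∈ exponents (L ^ a) := by
  have hbdd : BddAbove {a | u ∈ exponents (L ^ a)} := ⟨u.degree, fun a ha =>
    (monomial_mem_pow_idealOfVars_iff a u one_ne_zero).mp
      (Ideal.pow_right_mono (hL.le_idealOfVars hL1) a ha)⟩
  refine ⟨fun h => exponents_mono (Ideal.pow_le_pow_right h) ?_, fun h => le_csSup hbdd h⟩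
  exact Nat.sSup_mem ⟨0, by simp [mem_exponents]⟩ hbdd

theorem IsMonomialIdeal.mem_exponents_pow_idealOrder (hL : IsMonomialIdeal L) (hL1 : L ≠ ⊤)
    (u : σ →₀ ℕ) : u ∈ exponents (L ^ idealOrder L u) :=
  (hL.le_idealOrder_iff hL1).mp le_rfl

theorem IsMonomialIdeal.idealOrder_add_le (hL : IsMonomialIdeal L) (hL1 : L ≠ ⊤)
    (u v : σ →₀ ℕ) : idealOrder L u + idealOrder L v ≤ idealOrder L (u + v) := by
  rw [hL.le_idealOrder_iff hL1, pow_add]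
  exact add_mem_exponents_mul (hL.mem_exponents_pow_idealOrder hL1 u)
    (hL.mem_exponents_pow_idealOrder hL1 v)

theorem IsMonomialIdeal.monotone_idealOrder (hL : IsMonomialIdeal L) (hL1 : L ≠ ⊤) :
    Monotone (idealOrder L) := fun u _ huv =>
  (hL.le_idealOrder_iff hL1).mpr
    (isUpperSet_exponents _ huv (hL.mem_exponents_pow_idealOrder hL1 u))

theorem le_or_exists_eq_add_single_of_add_eq_add_single {σ : Type*} {g h u : σ →₀ ℕ} {i : σ}
    (heq : g + h = u + Finsupp.single i 1) :
    h ≤ u ∨ ∃ h', h = h' + Finsupp.single i 1 ∧ g + h' = u := by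
  by_cases hi : h i = 0
  · left
    have hgi : g i ≠ 0 := by
      have := DFunLike.congr_fun heq i
      simp only [Finsupp.add_apply, Finsupp.single_eq_same] at this
      omega
    rw [← Finsupp.sub_add_single_one_cancel hgi, add_right_comm, add_left_inj] at heq
    exact heq ▸ le_add_self
  · refine .inr ⟨h - Finsupp.single i 1, (Finsupp.sub_add_single_one_cancel hi).symm, ?_⟩
    rwa [← Finsupp.sub_add_single_one_cancel hi, ← add_assoc, add_left_inj] at heq

theorem IsMonomialIdeal.mem_exponents_pow_of_add_single_mem (hL : IsMonomialIdeal L) {i : σ}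
    (hu : u + Finsupp.single i 1 ∈ exponents (L ^ (a + 1))) : u ∈ exponents (L ^ a) := by
  induction a generalizing u with
  | zero => simp [mem_exponents]
  | succ a ih =>
    rw [pow_succ', hL.exponents_mul (hL.pow _)] at hu
    obtain ⟨g, hg, h, hh, heq⟩ := hu
    obtain hle | ⟨h', rfl, rfl⟩ := le_or_exists_eq_add_single_of_add_eq_add_single heq
    · exact isUpperSet_exponents _ hle hh
    · rw [pow_succ']
      exact add_mem_exponents_mul hg (ih hh)

theorem IsMonomialIdeal.idealOrder_add_single_le (hL : IsMonomialIdeal L) (hL1 : L ≠ ⊤)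
    (u : σ →₀ ℕ) (i : σ) : idealOrder L (u + Finsupp.single i 1) ≤ idealOrder L u + 1 := by
  by_contra! h
  have hmem : u + Finsupp.single i 1 ∈ exponents (L ^ (idealOrder L u + 1 + 1)) :=
    (hL.le_idealOrder_iff hL1).mp h
  have hle : idealOrder L u + 1 ≤ idealOrder L u :=
    (hL.le_idealOrder_iff hL1).mpr (hL.mem_exponents_pow_of_add_single_mem hmem)
  omega

end Order

section VariableIdeals

/-- The ideal of `MvPolynomial σ R` generated by the variables in `A`; over a field these are the
monomial primes. -/
def varIdeal {σ : Type*} (R : Type*) [CommSemiring R] (A : Set σ) : Ideal (MvPolynomial σ R) :=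
  Ideal.span ((fun i => X i) '' A)

variable {σ R : Type*}

section CommSemiring

variable [CommSemiring R] {A : Set σ}

theorem mem_varIdeal_iff {f : MvPolynomial σ R} :
    f ∈ varIdeal R A ↔ ∀ u ∈ f.support, ∃ i ∈ A, u i ≠ 0 :=
  mem_ideal_span_X_image

theorem mem_exponents_varIdeal_iff [Nontrivial R] {u : σ →₀ ℕ} :
    u ∈ exponents (varIdeal R A) ↔ ∃ i ∈ A, u i ≠ 0 := by
  classical
  rw [mem_exponents, mem_varIdeal_iff]
  simp only [support_monomial, one_ne_zero, if_false, Finset.mem_singleton, forall_eq]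

theorem setOf_X_mem_varIdeal [Nontrivial R] (A : Set σ) :
    {i | (X i : MvPolynomial σ R) ∈ varIdeal R A} = A := by
  classical
  ext i
  refine mem_exponents_varIdeal_iff.trans ?_
  simp [Finsupp.single_apply]

theorem varIdeal_eq_ker_killCompl (A : Set σ) :
    varIdeal R A = RingHom.ker (killCompl (R := R) (Subtype.val_injective (p := (· ∉ A)))) := by
  ext f
  rw [mem_varIdeal_iff, RingHom.mem_ker, MvPolynomial.ext_iff]
  simp only [coeff_killCompl, coeff_zero]
  constructor
  · intro h v
    by_contra hv
    obtain ⟨i, hiA, hi⟩ := h _ (mem_support_iff.mpr hv)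
    exact hi (Finsupp.mapDomain_of_notMem_range v i (by simpa using hiA))
  · intro h u hu
    by_contra! hu0
    have hrange : (u.support : Set σ) ⊆ Set.range (Subtype.val : {i // i ∉ A} → σ) := by
      intro i hi
      simpa using fun hiA => Finsupp.mem_support_iff.mp hi (hu0 i hiA)
    refine mem_support_iff.mp hu ?_
    rw [← Finsupp.mapDomain_comapDomain _ Subtype.val_injective u hrange, h]

theorem exists_X_mem_of_mem_exponents {P : Ideal (MvPolynomial σ R)} (hP : P.IsPrime)
    {u : σ →₀ ℕ} (hu : u ∈ exponents P) : ∃ i, X i ∈ P ∧ u i ≠ 0 := by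
  rw [mem_exponents, monomial_eq, map_one, one_mul, Finsupp.prod, hP.prod_mem_iff] at hu
  obtain ⟨i, hi, hiP⟩ := hu
  exact ⟨i, hP.mem_of_pow_mem _ hiP, Finsupp.mem_support_iff.mp hi⟩

end CommSemiring

theorem isPrime_varIdeal [CommRing R] [IsDomain R] (A : Set σ) : (varIdeal R A).IsPrime :=
  varIdeal_eq_ker_killCompl (R := R) A ▸ RingHom.ker_isPrime _

theorem isMonomialIdeal_varIdeal {σ K : Type} [Field K] (A : Set σ) :
    IsMonomialIdeal (varIdeal K A) :=
  isMonomialIdeal_of_forall_mem_support fun _ hf u hu =>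
    mem_exponents_varIdeal_iff.mpr (mem_varIdeal_iff.mp hf u hu)

end VariableIdeals

section Colons

theorem mem_assOf_iff {A : Type} [CommRing A] [IsNoetherianRing A] {L P : Ideal A} :
    P ∈ assOf L ↔ P.IsPrime ∧ ∃ f : A, L.colon (Ideal.span {f}) = P := by
  have hcolon (f : A) : (⊥ : Submodule A (A ⧸ L)).colon {Ideal.Quotient.mk L f} =
      L.colon (Ideal.span {f}) := by
    ext g
    rw [Submodule.mem_colon_singleton, Submodule.mem_bot, Ideal.mem_colon_span_singleton,
      ← Ideal.Quotient.eq_zero_iff_mem]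
    rfl
  rw [assOf, AssociatedPrimes.mem_iff, isAssociatedPrime_iff, Ideal.Quotient.mk_surjective.exists]
  simp only [hcolon, eq_comm]

theorem mem_exponents_colon_monomial {σ R : Type*} [CommSemiring R]
    {L : Ideal (MvPolynomial σ R)} {u v : σ →₀ ℕ} :
    v ∈ exponents (L.colon (Ideal.span {monomial u (1 : R)})) ↔ u + v ∈ exponents L := by
  rw [mem_exponents, Ideal.mem_colon_span_singleton, monomial_mul, one_mul, add_comm,
    mem_exponents]

variable {σ K : Type} [Field K] {L : Ideal (MvPolynomial σ K)} {u : σ →₀ ℕ} {A : Set σ}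

theorem IsMonomialIdeal.colon_monomial (hL : IsMonomialIdeal L) (u : σ →₀ ℕ) :
    IsMonomialIdeal (L.colon (Ideal.span {monomial u (1 : K)})) := by
  refine isMonomialIdeal_of_forall_mem_support fun f hf v hv => ?_
  rw [mem_exponents_colon_monomial, add_comm]
  refine hL.mem_iff.mp (Ideal.mem_colon_span_singleton.mp hf) _ ?_
  rwa [mem_support_iff, coeff_mul_monomial, mul_one, ← mem_support_iff]

theorem IsMonomialIdeal.colon_monomial_eq_varIdeal_iff (hL : IsMonomialIdeal L) :
    L.colon (Ideal.span {monomial u (1 : K)}) = varIdeal K A ↔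
      ∀ v, u + v ∈ exponents L ↔ ∃ i ∈ A, v i ≠ 0 := by
  simp only [← mem_exponents_colon_monomial, ← mem_exponents_varIdeal_iff (R := K)]
  refine ⟨fun h v => by rw [h], fun h => ?_⟩
  exact (hL.colon_monomial u).ext (isMonomialIdeal_varIdeal A) (Set.ext h)

-- The colon of `L` by `f` contains the intersection of its colons by the monomials of `f`, so if it
-- is prime, then it contains one of the latter.
theorem IsMonomialIdeal.exists_colon_monomial_eq_varIdeal (hL : IsMonomialIdeal L)
    {f : MvPolynomial σ K} {P : Ideal (MvPolynomial σ K)} (hP : P.IsPrime)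
    (hf : L.colon (Ideal.span {f}) = P) :
    ∃ u ∈ f.support, L.colon (Ideal.span {monomial u (1 : K)}) = varIdeal K {i | X i ∈ P} := by
  have hinf : f.support.inf (fun u => L.colon (Ideal.span {monomial u (1 : K)})) ≤ P := by
    intro g hg
    rw [← hf, Ideal.mem_colon_span_singleton, ← f.support_sum_monomial_coeff, Finset.mul_sum]
    refine L.sum_mem fun u hu => ?_
    rw [← mul_one (coeff u f), ← C_mul_monomial, mul_left_comm]
    exact L.mul_mem_left _
      (Ideal.mem_colon_span_singleton.mp (Submodule.mem_finsetInf.mp hg u hu))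
  obtain ⟨u, hu, huP⟩ := hP.inf_le'.mp hinf
  refine ⟨u, hu, hL.colon_monomial_eq_varIdeal_iff.mpr fun v => ⟨fun hv => ?_, ?_⟩⟩
  · exact exists_X_mem_of_mem_exponents hP (huP (mem_exponents_colon_monomial.mpr hv))
  · rintro ⟨i, hi, hvi⟩
    have hXf : X i * f ∈ L := Ideal.mem_colon_span_singleton.mp (hf.symm ▸ hi)
    have hiu : Finsupp.single i 1 + u ∈ exponents L := by
      refine hL.mem_iff.mp hXf _ ?_
      rwa [mem_support_iff, coeff_X_mul, ← mem_support_iff]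
    have hiv : Finsupp.single i 1 ≤ v := Finsupp.single_le_iff.mpr (Nat.one_le_iff_ne_zero.mpr hvi)
    exact isUpperSet_exponents L (add_comm u v ▸ add_le_add_left hiv u) hiu

theorem IsMonomialIdeal.exists_degree_eq_and_colon_monomial_eq_varIdeal (hL : IsMonomialIdeal L)
    {f : MvPolynomial σ K} {d : ℕ} (hfd : f.IsHomogeneous d) {P : Ideal (MvPolynomial σ K)}
    (hP : P.IsPrime) (hf : L.colon (Ideal.span {f}) = P) :
    ∃ u : σ →₀ ℕ, u.degree = d ∧
      L.colon (Ideal.span {monomial u (1 : K)}) = varIdeal K {i | X i ∈ P} := by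
  obtain ⟨u, hu, huP⟩ := hL.exists_colon_monomial_eq_varIdeal hP hf
  exact ⟨u, not_imp_comm.mp hfd.coeff_eq_zero (mem_support_iff.mp hu), huP⟩

theorem vnum_le_degree {p : Ideal (MvPolynomial σ K)}
    (h : L.colon (Ideal.span {monomial u (1 : K)}) = p) : vnum L p ≤ u.degree :=
  Nat.sInf_le ⟨_, isHomogeneous_monomial _ rfl, h⟩

variable [Finite σ]

theorem varIdeal_mem_assOf (h : L.colon (Ideal.span {monomial u (1 : K)}) = varIdeal K A) :
    varIdeal K A ∈ assOf L :=
  mem_assOf_iff.mpr ⟨isPrime_varIdeal A, _, h⟩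

theorem IsMonomialIdeal.exists_degree_eq_vnum (hL : IsMonomialIdeal L)
    (hA : varIdeal K A ∈ assOf L) :
    ∃ u : σ →₀ ℕ, L.colon (Ideal.span {monomial u (1 : K)}) = varIdeal K A ∧
      u.degree = vnum L (varIdeal K A) := by
  obtain ⟨hP, f₀, hf₀⟩ := mem_assOf_iff.mp hA
  obtain ⟨u₀, -, hu₀⟩ := hL.exists_colon_monomial_eq_varIdeal hP hf₀
  rw [setOf_X_mem_varIdeal] at hu₀
  obtain ⟨f, hfd, hf⟩ : vnum L (varIdeal K A) ∈ {d : ℕ | ∃ f : MvPolynomial σ K,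
      f.IsHomogeneous d ∧ L.colon (Ideal.span {f}) = varIdeal K A} :=
    Nat.sInf_mem ⟨_, _, isHomogeneous_monomial _ rfl, hu₀⟩
  obtain ⟨u, hud, huA⟩ := hL.exists_degree_eq_and_colon_monomial_eq_varIdeal hfd hP hf
  rw [setOf_X_mem_varIdeal] at huA
  exact ⟨u, huA, hud⟩

theorem vnumber_le_degree (h : L.colon (Ideal.span {monomial u (1 : K)}) = varIdeal K A) :
    vnumber L ≤ u.degree :=
  Nat.sInf_le ⟨_, varIdeal_mem_assOf h, _, isHomogeneous_monomial _ rfl, h⟩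

theorem IsMonomialIdeal.exists_degree_eq_vnumber (hL : IsMonomialIdeal L) (hL1 : L ≠ ⊤) :
    ∃ (u : σ →₀ ℕ) (A : Set σ), L.colon (Ideal.span {monomial u (1 : K)}) = varIdeal K A ∧
      u.degree = vnumber L := by
  have : Nontrivial (MvPolynomial σ K ⧸ L) := Ideal.Quotient.nontrivial_iff.mpr hL1
  obtain ⟨P₀, hP₀⟩ := associatedPrimes.nonempty (MvPolynomial σ K) (MvPolynomial σ K ⧸ L)
  obtain ⟨hP₀prime, f₀, hf₀⟩ := mem_assOf_iff.mp hP₀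
  obtain ⟨u₀, -, hu₀⟩ := hL.exists_colon_monomial_eq_varIdeal hP₀prime hf₀
  obtain ⟨P, hP, f, hfd, hf⟩ : vnumber L ∈ {d : ℕ | ∃ p ∈ assOf L, ∃ f : MvPolynomial σ K,
      f.IsHomogeneous d ∧ L.colon (Ideal.span {f}) = p} :=
    Nat.sInf_mem ⟨_, _, varIdeal_mem_assOf hu₀, _, isHomogeneous_monomial _ rfl, hu₀⟩
  obtain ⟨u, hud, huP⟩ :=
    hL.exists_degree_eq_and_colon_monomial_eq_varIdeal hfd (mem_assOf_iff.mp hP).1 hf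
  exact ⟨u, _, huP, hud⟩

end Colons

section ColonPowers

variable {σ K : Type} [Field K] {L : Ideal (MvPolynomial σ K)} {u : σ →₀ ℕ} {A : Set σ} {k : ℕ}

theorem IsMonomialIdeal.colon_monomial_pow_eq_varIdeal_iff (hL : IsMonomialIdeal L)
    (hL1 : L ≠ ⊤) :
    (L ^ k).colon (Ideal.span {monomial u (1 : K)}) = varIdeal K A ↔
      ∀ v, k ≤ idealOrder L (u + v) ↔ ∃ i ∈ A, v i ≠ 0 := by
  simp only [(hL.pow k).colon_monomial_eq_varIdeal_iff, hL.le_idealOrder_iff hL1]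

theorem IsMonomialIdeal.idealOrder_eq_of_colon_eq_varIdeal (hL : IsMonomialIdeal L)
    (hL1 : L ≠ ⊤) (hA : A.Nonempty)
    (h : (L ^ (k + 1)).colon (Ideal.span {monomial u (1 : K)}) = varIdeal K A) :
    idealOrder L u = k := by
  rw [hL.colon_monomial_pow_eq_varIdeal_iff hL1] at h
  obtain ⟨i, hi⟩ := hA
  have hlt : ¬ k + 1 ≤ idealOrder L u := by simpa using h 0
  have hge : k + 1 ≤ idealOrder L (u + Finsupp.single i 1) := (h _).mpr ⟨i, hi, by simp⟩
  have hstep := hL.idealOrder_add_single_le hL1 u i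
  omega

end ColonPowers

section SumExponents

variable {σ τ : Type*} {x : σ →₀ ℕ} {y : τ →₀ ℕ}

theorem exists_sumElim_eq (w : σ ⊕ τ →₀ ℕ) :
    ∃ (x : σ →₀ ℕ) (y : τ →₀ ℕ), Finsupp.sumElim x y = w :=
  ⟨_, _, Finsupp.comapDomain_sumElim_comapDomain w⟩

theorem degree_sumElim (x : σ →₀ ℕ) (y : τ →₀ ℕ) :
    (Finsupp.sumElim x y).degree = x.degree + y.degree := by
  rw [Finsupp.sumElim_eq_add, map_add, Finsupp.degree_mapDomain, Finsupp.degree_mapDomain]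

theorem sumElim_le_sumElim_iff {x' : σ →₀ ℕ} {y' : τ →₀ ℕ} :
    Finsupp.sumElim x y ≤ Finsupp.sumElim x' y' ↔ x ≤ x' ∧ y ≤ y' := by
  simp only [Finsupp.le_def, Sum.forall, Finsupp.sumElim_inl, Finsupp.sumElim_inr]

theorem exists_mem_image_union_image_sumElim_ne_zero_iff {A : Set σ} {B : Set τ} :
    (∃ i ∈ Sum.inl '' A ∪ Sum.inr '' B, Finsupp.sumElim x y i ≠ 0) ↔
      (∃ i ∈ A, x i ≠ 0) ∨ ∃ j ∈ B, y j ≠ 0 := by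
  simp [or_and_right, exists_or]

end SumExponents

section SumIdeals

variable {σ τ R : Type*} [CommSemiring R]

/-- The sum `I + J` of ideals in disjoint sets of variables, in the polynomial ring in all of the
variables. -/
def sumIdeal (I : Ideal (MvPolynomial σ R)) (J : Ideal (MvPolynomial τ R)) :
    Ideal (MvPolynomial (σ ⊕ τ) R) :=
  I.map (rename Sum.inl) + J.map (rename Sum.inr)

theorem sumIdeal_span_monomial (G : Set (σ →₀ ℕ)) (H : Set (τ →₀ ℕ)) :
    sumIdeal (Ideal.span ((fun a => monomial a (1 : R)) '' G))
        (Ideal.span ((fun a => monomial a (1 : R)) '' H)) =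
      Ideal.span ((fun a => monomial a (1 : R)) ''
        ((fun a => Finsupp.sumElim a 0) '' G ∪ (fun b => Finsupp.sumElim 0 b) '' H)) := by
  rw [sumIdeal, Ideal.map_span, Ideal.map_span, Submodule.add_eq_sup, ← Ideal.span_union,
    Set.image_union]
  simp only [Set.image_image, rename_monomial, Finsupp.sumElim_eq_add, Finsupp.mapDomain_zero,
    add_zero, zero_add]

theorem sumIdeal_varIdeal (A : Set σ) (B : Set τ) :
    sumIdeal (varIdeal R A) (varIdeal R B) = varIdeal R (Sum.inl '' A ∪ Sum.inr '' B) := by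
  rw [sumIdeal, varIdeal, varIdeal, varIdeal, Ideal.map_span, Ideal.map_span,
    Submodule.add_eq_sup, ← Ideal.span_union, Set.image_union]
  simp only [Set.image_image, rename_X]

theorem sumElim_mem_exponents_sumIdeal_pow {I : Ideal (MvPolynomial σ R)}
    {J : Ideal (MvPolynomial τ R)} {x : σ →₀ ℕ} {y : τ →₀ ℕ} {a b : ℕ}
    (hx : x ∈ exponents (I ^ a)) (hy : y ∈ exponents (J ^ b)) :
    Finsupp.sumElim x y ∈ exponents (sumIdeal I J ^ (a + b)) := by
  rw [Finsupp.sumElim_eq_add, pow_add]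
  refine add_mem_exponents_mul (Ideal.pow_right_mono le_sup_left a ?_)
    (Ideal.pow_right_mono le_sup_right b ?_)
  · rw [← Ideal.map_pow, ← rename_monomial]
    exact Ideal.mem_map_of_mem _ hx
  · rw [← Ideal.map_pow, ← rename_monomial]
    exact Ideal.mem_map_of_mem _ hy

end SumIdeals

section SumMonomialIdeals

variable {σ τ K : Type} [Field K] {I : Ideal (MvPolynomial σ K)} {J : Ideal (MvPolynomial τ K)}
  {x : σ →₀ ℕ} {y : τ →₀ ℕ} {k : ℕ}

theorem isMonomialIdeal_sumIdeal (hI : IsMonomialIdeal I) (hJ : IsMonomialIdeal J) :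
    IsMonomialIdeal (sumIdeal I J) := by
  obtain ⟨G, rfl⟩ := hI
  obtain ⟨H, rfl⟩ := hJ
  exact ⟨_, sumIdeal_span_monomial G H⟩

theorem mem_exponents_or_of_sumElim_mem_exponents_sumIdeal (hI : IsMonomialIdeal I)
    (hJ : IsMonomialIdeal J) (h : Finsupp.sumElim x y ∈ exponents (sumIdeal I J)) :
    x ∈ exponents I ∨ y ∈ exponents J := by
  obtain ⟨G, rfl⟩ := hI
  obtain ⟨H, rfl⟩ := hJ
  rw [sumIdeal_span_monomial, mem_exponents_span] at h
  simp only [mem_exponents_span]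
  obtain ⟨_, ⟨g, hg, rfl⟩ | ⟨g, hg, rfl⟩, hle⟩ := h
  · exact .inl ⟨g, hg, (sumElim_le_sumElim_iff.mp hle).1⟩
  · exact .inr ⟨g, hg, (sumElim_le_sumElim_iff.mp hle).2⟩

variable (hI : IsMonomialIdeal I) (hJ : IsMonomialIdeal J) (hI1 : I ≠ ⊤) (hJ1 : J ≠ ⊤)

include hI hJ hI1 hJ1

theorem sumIdeal_ne_top : sumIdeal I J ≠ ⊤ := by
  intro htop
  have h0 : Finsupp.sumElim (0 : σ →₀ ℕ) (0 : τ →₀ ℕ) ∈ exponents (sumIdeal I J) := by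
    rwa [Finsupp.sumElim_zero_zero, zero_mem_exponents_iff]
  obtain hI0 | hJ0 := mem_exponents_or_of_sumElim_mem_exponents_sumIdeal hI hJ h0
  · exact hI1 (zero_mem_exponents_iff.mp hI0)
  · exact hJ1 (zero_mem_exponents_iff.mp hJ0)

theorem le_idealOrder_add_idealOrder_of_sumElim_mem_exponents
    (h : Finsupp.sumElim x y ∈ exponents (sumIdeal I J ^ k)) :
    k ≤ idealOrder I x + idealOrder J y := by
  induction k generalizing x y with
  | zero => exact Nat.zero_le _
  | succ k ih =>
    have hS := isMonomialIdeal_sumIdeal hI hJ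
    rw [pow_succ, (hS.pow k).exponents_mul hS] at h
    obtain ⟨w₁, h₁, w₂, h₂, hsum⟩ := h
    obtain ⟨x₁, y₁, rfl⟩ := exists_sumElim_eq w₁
    obtain ⟨x₂, y₂, rfl⟩ := exists_sumElim_eq w₂
    obtain ⟨hx, hy⟩ : x₁ + x₂ ≤ x ∧ y₁ + y₂ ≤ y := by
      rw [← sumElim_le_sumElim_iff, Finsupp.sumElim_add]
      exact hsum.le
    have hk : k ≤ idealOrder I x₁ + idealOrder J y₁ := ih h₁
    have h1 : 1 ≤ idealOrder I x₂ ∨ 1 ≤ idealOrder J y₂ := by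
      rw [hI.le_idealOrder_iff hI1, hJ.le_idealOrder_iff hJ1, pow_one, pow_one]
      exact mem_exponents_or_of_sumElim_mem_exponents_sumIdeal hI hJ h₂
    have hIx := (hI.idealOrder_add_le hI1 x₁ x₂).trans (hI.monotone_idealOrder hI1 hx)
    have hJy := (hJ.idealOrder_add_le hJ1 y₁ y₂).trans (hJ.monotone_idealOrder hJ1 hy)
    omega

theorem idealOrder_sumIdeal (x : σ →₀ ℕ) (y : τ →₀ ℕ) :
    idealOrder (sumIdeal I J) (Finsupp.sumElim x y) = idealOrder I x + idealOrder J y := by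
  have hS := isMonomialIdeal_sumIdeal hI hJ
  have hS1 := sumIdeal_ne_top hI hJ hI1 hJ1
  refine le_antisymm ?_ ?_
  · exact le_idealOrder_add_idealOrder_of_sumElim_mem_exponents hI hJ hI1 hJ1
      (hS.mem_exponents_pow_idealOrder hS1 _)
  · rw [hS.le_idealOrder_iff hS1]
    exact sumElim_mem_exponents_sumIdeal_pow (hI.mem_exponents_pow_idealOrder hI1 x)
      (hJ.mem_exponents_pow_idealOrder hJ1 y)

end SumMonomialIdeals

section ColonSums

variable {σ τ K : Type} [Field K] {I : Ideal (MvPolynomial σ K)} {J : Ideal (MvPolynomial τ K)}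
  {x : σ →₀ ℕ} {y : τ →₀ ℕ} {A : Set σ} {B : Set τ} {k : ℕ}
  (hI : IsMonomialIdeal I) (hJ : IsMonomialIdeal J) (hI1 : I ≠ ⊤) (hJ1 : J ≠ ⊤)

include hI hJ hI1 hJ1

theorem colon_sumIdeal_pow_eq_iff_forall_le_idealOrder :
    (sumIdeal I J ^ k).colon (Ideal.span {monomial (Finsupp.sumElim x y) (1 : K)}) =
        sumIdeal (varIdeal K A) (varIdeal K B) ↔
      ∀ v w, k ≤ idealOrder I (x + v) + idealOrder J (y + w) ↔
        (∃ i ∈ A, v i ≠ 0) ∨ ∃ j ∈ B, w j ≠ 0 := by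
  rw [sumIdeal_varIdeal, (isMonomialIdeal_sumIdeal hI hJ).colon_monomial_pow_eq_varIdeal_iff
    (sumIdeal_ne_top hI hJ hI1 hJ1)]
  have key (v : σ →₀ ℕ) (w : τ →₀ ℕ) :
      (k ≤ idealOrder (sumIdeal I J) (Finsupp.sumElim x y + Finsupp.sumElim v w) ↔
          ∃ i ∈ Sum.inl '' A ∪ Sum.inr '' B, Finsupp.sumElim v w i ≠ 0) ↔
        (k ≤ idealOrder I (x + v) + idealOrder J (y + w) ↔
          (∃ i ∈ A, v i ≠ 0) ∨ ∃ j ∈ B, w j ≠ 0) := by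
    rw [← Finsupp.sumElim_add, idealOrder_sumIdeal hI hJ hI1 hJ1,
      exists_mem_image_union_image_sumElim_ne_zero_iff]
  refine ⟨fun h v w => (key v w).mp (h _), fun h u => ?_⟩
  obtain ⟨v, w, rfl⟩ := exists_sumElim_eq u
  exact (key v w).mpr (h v w)

theorem nonempty_of_colon_sumIdeal_pow_eq (hI0 : I ≠ ⊥) (hJ0 : J ≠ ⊥)
    (h : (sumIdeal I J ^ k).colon (Ideal.span {monomial (Finsupp.sumElim x y) (1 : K)}) =
      sumIdeal (varIdeal K A) (varIdeal K B)) : A.Nonempty ∧ B.Nonempty := by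
  rw [colon_sumIdeal_pow_eq_iff_forall_le_idealOrder hI hJ hI1 hJ1] at h
  obtain ⟨v, hv⟩ := hI.nonempty_exponents hI0
  obtain ⟨w, hw⟩ := hJ.nonempty_exponents hJ0
  have hIk : k ≤ idealOrder I (x + k • v) := (hI.le_idealOrder_iff hI1).mpr
    (isUpperSet_exponents _ le_add_self (nsmul_mem_exponents_pow hv k))
  have hJk : k ≤ idealOrder J (y + k • w) := (hJ.le_idealOrder_iff hJ1).mpr
    (isUpperSet_exponents _ le_add_self (nsmul_mem_exponents_pow hw k))
  constructor
  · obtain ⟨i, hi, -⟩ | ⟨j, -, hj⟩ := (h (k • v) 0).mp (le_add_right hIk)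
    · exact ⟨i, hi⟩
    · exact absurd rfl hj
  · obtain ⟨i, -, hi⟩ | ⟨j, hj, -⟩ := (h 0 (k • w)).mp (le_add_left hJk)
    · exact absurd rfl hi
    · exact ⟨j, hj⟩

theorem colon_sumIdeal_pow_eq (hA : A.Nonempty) (hB : B.Nonempty) {a b : ℕ}
    (hx : (I ^ (a + 1)).colon (Ideal.span {monomial x (1 : K)}) = varIdeal K A)
    (hy : (J ^ (b + 1)).colon (Ideal.span {monomial y (1 : K)}) = varIdeal K B) :
    (sumIdeal I J ^ (a + b + 1)).colon (Ideal.span {monomial (Finsupp.sumElim x y) (1 : K)}) =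
      sumIdeal (varIdeal K A) (varIdeal K B) := by
  rw [colon_sumIdeal_pow_eq_iff_forall_le_idealOrder hI hJ hI1 hJ1]
  intro v w
  have hxa : idealOrder I x = a := hI.idealOrder_eq_of_colon_eq_varIdeal hI1 hA hx
  have hyb : idealOrder J y = b := hJ.idealOrder_eq_of_colon_eq_varIdeal hJ1 hB hy
  have hxv : idealOrder I x ≤ idealOrder I (x + v) := hI.monotone_idealOrder hI1 le_self_add
  have hyw : idealOrder J y ≤ idealOrder J (y + w) := hJ.monotone_idealOrder hJ1 le_self_add
  rw [← (hI.colon_monomial_pow_eq_varIdeal_iff hI1).mp hx v,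
    ← (hJ.colon_monomial_pow_eq_varIdeal_iff hJ1).mp hy w]
  omega

theorem exists_colon_eq_varIdeal_of_colon_sumIdeal_pow_eq (hA : A.Nonempty)
    (h : (sumIdeal I J ^ k).colon (Ideal.span {monomial (Finsupp.sumElim x y) (1 : K)}) =
      sumIdeal (varIdeal K A) (varIdeal K B)) :
    ∃ a b, k = a + b + 1 ∧
      (I ^ (a + 1)).colon (Ideal.span {monomial x (1 : K)}) = varIdeal K A ∧
      (J ^ (b + 1)).colon (Ideal.span {monomial y (1 : K)}) = varIdeal K B := by
  rw [colon_sumIdeal_pow_eq_iff_forall_le_idealOrder hI hJ hI1 hJ1] at h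
  obtain ⟨i, hi⟩ := hA
  have hlt : ¬ k ≤ idealOrder I x + idealOrder J y := by simpa using h 0 0
  have hle : k ≤ idealOrder I (x + Finsupp.single i 1) + idealOrder J y := by
    simpa using (h (Finsupp.single i 1) 0).mpr (.inl ⟨i, hi, by simp⟩)
  have hstep := hI.idealOrder_add_single_le hI1 x i
  have hk : k = idealOrder I x + idealOrder J y + 1 := by omega
  refine ⟨_, _, hk, (hI.colon_monomial_pow_eq_varIdeal_iff hI1).mpr fun v => ?_,
    (hJ.colon_monomial_pow_eq_varIdeal_iff hJ1).mpr fun w => ?_⟩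
  · have hv : k ≤ idealOrder I (x + v) + idealOrder J y ↔ ∃ i ∈ A, v i ≠ 0 := by
      simpa using h v 0
    rw [← hv]
    omega
  · have hw : k ≤ idealOrder I x + idealOrder J (y + w) ↔ ∃ j ∈ B, w j ≠ 0 := by
      simpa using h 0 w
    rw [← hw]
    omega

variable [Finite σ] [Finite τ]

theorem vnumber_sumIdeal_pow_le (hA : A.Nonempty) (hB : B.Nonempty) {a b : ℕ}
    (hIA : varIdeal K A ∈ assOf (I ^ (a + 1))) (hJB : varIdeal K B ∈ assOf (J ^ (b + 1))) :
    vnumber (sumIdeal I J ^ (a + b + 1)) ≤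
      vnum (I ^ (a + 1)) (varIdeal K A) + vnum (J ^ (b + 1)) (varIdeal K B) := by
  obtain ⟨x, hx, hxdeg⟩ := (hI.pow _).exists_degree_eq_vnum hIA
  obtain ⟨y, hy, hydeg⟩ := (hJ.pow _).exists_degree_eq_vnum hJB
  rw [← hxdeg, ← hydeg, ← degree_sumElim]
  have hxy := colon_sumIdeal_pow_eq hI hJ hI1 hJ1 hA hB hx hy
  rw [sumIdeal_varIdeal] at hxy
  exact vnumber_le_degree hxy

theorem exists_vnumber_sumIdeal_pow_eq (hI0 : I ≠ ⊥) (hJ0 : J ≠ ⊥) (hk : 1 ≤ k) :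
    ∃ (A : Set σ) (B : Set τ) (a b : ℕ), A.Nonempty ∧ B.Nonempty ∧ k = a + b + 1 ∧
      sumIdeal (varIdeal K A) (varIdeal K B) ∈ assOf (sumIdeal I J ^ k) ∧
      varIdeal K A ∈ assOf (I ^ (a + 1)) ∧ varIdeal K B ∈ assOf (J ^ (b + 1)) ∧
      vnumber (sumIdeal I J ^ k) =
        vnum (I ^ (a + 1)) (varIdeal K A) + vnum (J ^ (b + 1)) (varIdeal K B) := by
  have hS1 : sumIdeal I J ^ k ≠ ⊤ :=
    ne_top_of_le_ne_top (sumIdeal_ne_top hI hJ hI1 hJ1) (Ideal.pow_le_self (by omega))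
  obtain ⟨u, C, hu, hdeg⟩ := ((isMonomialIdeal_sumIdeal hI hJ).pow k).exists_degree_eq_vnumber hS1
  have hass := varIdeal_mem_assOf hu
  obtain ⟨x, y, rfl⟩ := exists_sumElim_eq u
  rw [← Set.image_preimage_inl_union_image_preimage_inr C, ← sumIdeal_varIdeal] at hu hass
  obtain ⟨hA, hB⟩ := nonempty_of_colon_sumIdeal_pow_eq hI hJ hI1 hJ1 hI0 hJ0 hu
  obtain ⟨a, b, rfl, hx, hy⟩ :=
    exists_colon_eq_varIdeal_of_colon_sumIdeal_pow_eq hI hJ hI1 hJ1 hA hu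
  have hIA := varIdeal_mem_assOf hx
  have hJB := varIdeal_mem_assOf hy
  refine ⟨_, _, a, b, hA, hB, rfl, hass, hIA, hJB, le_antisymm ?_ ?_⟩
  · exact vnumber_sumIdeal_pow_le hI hJ hI1 hJ1 hA hB hIA hJB
  · rw [← hdeg, degree_sumElim]
    exact add_le_add (vnum_le_degree hx) (vnum_le_degree hy)

end ColonSums

theorem stmt8_general {σ τ K : Type} [Field K] [Finite σ] [Finite τ]
    (I : Ideal (MvPolynomial σ K)) (J : Ideal (MvPolynomial τ K))
    (hI0 : I ≠ ⊥) (hI1 : I ≠ ⊤) (hI : IsMonomialIdeal I)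
    (hJ0 : J ≠ ⊥) (hJ1 : J ≠ ⊤) (hJ : IsMonomialIdeal J) (k : ℕ) (hk : 1 ≤ k) :
    IsLeast {d : ℕ | ∃ (A : Set σ) (B : Set τ), A.Nonempty ∧ B.Nonempty ∧
      ∃ p q, p = varIdeal K A ∧ q = varIdeal K B ∧ sumIdeal p q ∈ assOf (sumIdeal I J ^ k) ∧
        ∃ ℓ : ℕ, ℓ < k ∧ p ∈ assOf (I ^ (k - ℓ)) ∧ q ∈ assOf (J ^ (ℓ + 1)) ∧
          d = vnum (I ^ (k - ℓ)) p + vnum (J ^ (ℓ + 1)) q}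
      (vnumber (sumIdeal I J ^ k)) := by
  constructor
  · obtain ⟨A, B, a, b, hA, hB, rfl, hass, hIA, hJB, heq⟩ :=
      exists_vnumber_sumIdeal_pow_eq hI hJ hI1 hJ1 hI0 hJ0 hk
    have ha : a + b + 1 - b = a + 1 := by omega
    exact ⟨A, B, hA, hB, _, _, rfl, rfl, hass, b, by omega, ha ▸ hIA, hJB, ha ▸ heq⟩
  · rintro _ ⟨A, B, hA, hB, _, _, rfl, rfl, -, ℓ, hℓ, hIA, hJB, rfl⟩
    obtain ⟨a, rfl⟩ : ∃ a, k = a + ℓ + 1 := ⟨k - ℓ - 1, by omega⟩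
    rw [show a + ℓ + 1 - ℓ = a + 1 by omega] at hIA ⊢
    exact vnumber_sumIdeal_pow_le hI hJ hI1 hJ1 hA hB hIA hJB

/-- Corollary 4.2: for nonzero proper monomial ideals `I ⊂ R`, `J ⊂ T`
identified with their extensions to `S`, and `k ≥ 1`,
`v((I+J)^k)` is the minimum, over pairs of nonzero monomial primes `p ⊂ R`, `q ⊂ T` with
`p + q ∈ Ass((I+J)^k)` and over `0 ≤ ℓ < k` with `p ∈ Ass(I^{k−ℓ})`, `q ∈ Ass(J^{ℓ+1})`,
of `v_p(I^{k−ℓ}) + v_q(J^{ℓ+1})`. -/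
theorem stmt8 {K : Type} [Field K] {n m : ℕ}
    (I : Ideal (MvPolynomial (Fin n) K)) (J : Ideal (MvPolynomial (Fin m) K))
    (hInz : I ≠ ⊥) (hIpr : I ≠ ⊤) (hImon : IsMonomialIdeal I)
    (hJnz : J ≠ ⊥) (hJpr : J ≠ ⊤) (hJmon : IsMonomialIdeal J)
    (eI eJ : Ideal (MvPolynomial (Fin n ⊕ Fin m) K))
    (heI : eI = Ideal.map (rename Sum.inl) I)
    (heJ : eJ = Ideal.map (rename Sum.inr) J)
    (k : ℕ) (hk : 1 ≤ k) :
    vnumber ((eI + eJ) ^ k) =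
      sInf {d : ℕ | ∃ (A : Set (Fin n)) (B : Set (Fin m)), A.Nonempty ∧ B.Nonempty ∧
        ∃ (p : Ideal (MvPolynomial (Fin n) K)) (q : Ideal (MvPolynomial (Fin m) K)),
          p = Ideal.span ((fun i => (X i : MvPolynomial (Fin n) K)) '' A) ∧
          q = Ideal.span ((fun i => (X i : MvPolynomial (Fin m) K)) '' B) ∧
          Ideal.map (rename Sum.inl) p + Ideal.map (rename Sum.inr) q ∈
            assOf ((eI + eJ) ^ k) ∧
          ∃ ℓ : ℕ, ℓ < k ∧ p ∈ assOf (I ^ (k - ℓ)) ∧ q ∈ assOf (J ^ (ℓ + 1)) ∧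
            d = vnum (I ^ (k - ℓ)) p + vnum (J ^ (ℓ + 1)) q} := by
  subst heI heJ
  exact (stmt8_general I J hInz hIpr hImon hJnz hJpr hJmon k hk).csInf_eq.symm
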